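/- For every δ ∈ (0, 1/2) and every t₀ ∈ (0, 1/4] there exists a constant C = C(δ, t₀) such that, under the hypotheses of the context, for every t ∈ [t₀, 1/4] one has | φ̃(1 − 2t) − (2^{2t}(2^{2t} − 1) / (2t · Γ(1 − 2t))) · (x/a)^{2t} | ≤ C·( a^{−2t} x^{2t−δ} + 1 ). -/

import Mathlib

open Real MeasureTheory

/-- The J-Bessel function of complex order `ν` at real argument `u`, defined by the series
`J_ν(u) = Σ_{j=0}^∞ ((−1)^j / (j! · Γ(j+1+ν))) · (u/2)^{2j+ν}`, where
`(u/2)^ν := exp(ν · log(u/2))` with the real logarithm. -/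
noncomputable def besselJ (ν : ℂ) (u : ℝ) : ℂ :=
  ∑' j : ℕ, ((-1 : ℂ) ^ j / ((Nat.factorial j : ℂ) * Complex.Gamma ((j : ℂ) + 1 + ν))) *
    Complex.exp ((2 * (j : ℂ) + ν) * (Real.log (u / 2) : ℂ))

/-- `φ̃(β) := ∫_0^∞ J_{β−1}(u) φ(u) du/u`. -/
noncomputable def phiTilde (φ : ℝ → ℝ) (β : ℂ) : ℂ :=
  ∫ u in Set.Ioi (0 : ℝ), besselJ (β - 1) u * (φ u : ℂ) / (u : ℂ)

/-!
The argument works for complex `s` in the strip `0 ≤ Re s < 1` in place of `2t`. On `(0, 2]` the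
Bessel function `J_{-s}(u)` differs from the leading term `(u / 2) ^ (-s) / Γ(1 - s)` of its series
by `O(u)`, so with respect to `du / u` this replacement costs `O(1)`. On the plateau
`[a / (2x), a / x]` of `φ` the leading term integrates exactly to
`2 ^ s (2 ^ s - 1) / (s Γ(1 - s)) (x / a) ^ s`. The two ramps of `φ` have relative length `O(T / x)`
and the leading term has size `O((x / a) ^ Re s)` there, so they contribute
`O((x / a) ^ Re s T / x)`, which is the error `a ^ (-2t) x ^ (2t - δ)` when `T = x ^ (1 - δ)`.
-/

lemma one_le_Gamma_of_le_one {s : ℝ} (hs₀ : 0 < s) (hs₁ : s ≤ 1) : 1 ≤ Real.Gamma s := by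
  rw [← Real.Gamma_one]
  exact Real.Gamma_strictAntiOn_Ioc.antitoneOn ⟨hs₀, hs₁⟩ ⟨one_pos, le_rfl⟩ hs₁

lemma four_fifths_le_Gamma {s : ℝ} (hs₁ : 1 ≤ s) (hs₂ : s ≤ 2) : 4 / 5 ≤ Real.Gamma s := by
  have hs₀ : 0 < s := by linarith
  have hconv := Real.convexOn_Gamma.2 (x := s) (y := s + 1) (Set.mem_Ioi.2 hs₀)
    (Set.mem_Ioi.2 (by linarith)) (sub_nonneg.2 hs₁) (sub_nonneg.2 hs₂) (by ring)
  have htwo : (s - 1) • s + (2 - s) • (s + 1) = 2 := by simp only [smul_eq_mul]; ring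
  rw [htwo, Real.Gamma_two, Real.Gamma_add_one hs₀.ne', smul_eq_mul, smul_eq_mul] at hconv
  have hfactor : s - 1 + (2 - s) * s ≤ 5 / 4 := by nlinarith [sq_nonneg (s - 3 / 2)]
  have hscale := mul_le_mul_of_nonneg_right hfactor (Real.Gamma_pos_of_pos hs₀).le
  linarith

lemma norm_Gamma_le_norm_Gamma_add_natCast {z : ℂ} (hz : 1 ≤ z.re) (n : ℕ) :
    ‖Complex.Gamma z‖ ≤ ‖Complex.Gamma (z + n)‖ := by
  induction n with
  | zero => simp
  | succ n ih =>
    have hre : 1 ≤ (z + n).re := by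
      rw [Complex.add_re, Complex.natCast_re]
      exact le_add_of_le_of_nonneg hz n.cast_nonneg
    have hne : z + n ≠ 0 := Complex.ne_zero_of_re_pos (one_pos.trans_le hre)
    rw [Nat.cast_succ, ← add_assoc, Complex.Gamma_add_one _ hne, norm_mul]
    exact ih.trans (le_mul_of_one_le_left (norm_nonneg _) (hre.trans (Complex.re_le_norm _)))

lemma hasSum_pow_succ_div_factorial (r : ℝ) :
    HasSum (fun j : ℕ ↦ r ^ (j + 1) / (Nat.factorial (j + 1) : ℝ)) (Real.exp r - 1) := by
  rw [Real.exp_eq_exp_ℝ]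
  simpa using (hasSum_nat_add_iff' 1).2 (NormedSpace.expSeries_div_hasSum_exp r)

/-- The Bessel–Clifford function `∑ z ^ j / (j! Γ(j + 1 + ν))`, the entire factor of `J_ν`: for
`u > 0` one has `J_ν(u) = (u / 2) ^ ν * besselClifford ν (-(u / 2) ^ 2)`. -/
noncomputable def besselClifford (ν z : ℂ) : ℂ :=
  ∑' j : ℕ, z ^ j / ((Nat.factorial j : ℂ) * Complex.Gamma ((j : ℂ) + 1 + ν))

section Bessel

variable {ν : ℂ}

lemma norm_besselClifford_term_succ_le (hν : -1 < ν.re) (z : ℂ) (j : ℕ) :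
    ‖z ^ (j + 1) / ((Nat.factorial (j + 1) : ℂ) * Complex.Gamma (((j + 1 : ℕ) : ℂ) + 1 + ν))‖ ≤
      ‖z‖ ^ (j + 1) / (Nat.factorial (j + 1) : ℝ) * ‖Complex.Gamma (ν + 2)‖⁻¹ := by
  have hre : 1 ≤ (ν + 2).re := by
    rw [Complex.add_re, Complex.re_ofNat]
    linarith
  have hpos : 0 < ‖Complex.Gamma (ν + 2)‖ :=
    norm_pos_iff.2 (Complex.Gamma_ne_zero_of_re_pos (one_pos.trans_le hre))
  have harg : ((j + 1 : ℕ) : ℂ) + 1 + ν = ν + 2 + j := by push_cast; ring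
  rw [harg, norm_div, norm_mul, norm_pow, Complex.norm_natCast, ← div_div, div_eq_mul_inv _ ‖_‖]
  gcongr
  exact norm_Gamma_le_norm_Gamma_add_natCast hre j

lemma besselClifford_eq_inv_Gamma_add_tsum (hν : -1 < ν.re) (z : ℂ) :
    besselClifford ν z = (Complex.Gamma (ν + 1))⁻¹ + ∑' j : ℕ,
      z ^ (j + 1) / ((Nat.factorial (j + 1) : ℂ) * Complex.Gamma (((j + 1 : ℕ) : ℂ) + 1 + ν)) := by
  have hsum : Summable fun j : ℕ ↦
      z ^ j / ((Nat.factorial j : ℂ) * Complex.Gamma ((j : ℂ) + 1 + ν)) :=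
    (summable_nat_add_iff 1).1 <| Summable.of_norm_bounded
      ((hasSum_pow_succ_div_factorial ‖z‖).summable.mul_right ‖Complex.Gamma (ν + 2)‖⁻¹)
      (norm_besselClifford_term_succ_le hν z)
  rw [besselClifford, hsum.tsum_eq_zero_add]
  congr 1
  simp [add_comm]

lemma norm_besselClifford_sub_inv_Gamma_le (hν : -1 < ν.re) (z : ℂ) :
    ‖besselClifford ν z - (Complex.Gamma (ν + 1))⁻¹‖ ≤
      (Real.exp ‖z‖ - 1) * ‖Complex.Gamma (ν + 2)‖⁻¹ := by
  rw [besselClifford_eq_inv_Gamma_add_tsum hν, add_sub_cancel_left]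
  exact tsum_of_norm_bounded ((hasSum_pow_succ_div_factorial ‖z‖).mul_right _)
    (norm_besselClifford_term_succ_le hν z)

lemma continuous_besselClifford (hν : -1 < ν.re) : Continuous (besselClifford ν) := by
  rw [funext (besselClifford_eq_inv_Gamma_add_tsum hν)]
  refine continuous_const.add (continuous_iff_continuousAt.2 fun z₀ ↦ ?_)
  have hball : Metric.ball (0 : ℂ) (‖z₀‖ + 1) ∈ nhds z₀ :=
    Metric.isOpen_ball.mem_nhds (by simp)
  refine (continuousOn_tsum (fun j ↦ by fun_prop)
    ((hasSum_pow_succ_div_factorial (‖z₀‖ + 1)).summable.mul_right ‖Complex.Gamma (ν + 2)‖⁻¹)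
    fun j z hz ↦ ?_).continuousAt hball
  refine (norm_besselClifford_term_succ_le hν z j).trans ?_
  gcongr
  exact (mem_ball_zero_iff.1 hz).le

lemma besselJ_eq_cpow_mul_besselClifford (ν : ℂ) {u : ℝ} (hu : 0 < u) :
    besselJ ν u = ((u / 2 : ℝ) : ℂ) ^ ν * besselClifford ν (-((u / 2 : ℝ) : ℂ) ^ 2) := by
  have hne : ((u / 2 : ℝ) : ℂ) ≠ 0 := Complex.ofReal_ne_zero.2 (half_pos hu).ne'
  rw [besselJ, besselClifford, ← tsum_mul_left]
  congr with j
  have hexp : Complex.exp ((2 * (j : ℂ) + ν) * (Real.log (u / 2) : ℂ)) =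
      (((u / 2 : ℝ) : ℂ) ^ 2) ^ j * ((u / 2 : ℝ) : ℂ) ^ ν := by
    rw [Complex.ofReal_log (half_pos hu).le, mul_comm, ← Complex.cpow_def_of_ne_zero hne,
      Complex.cpow_add _ _ hne, ← pow_mul]
    norm_cast
  rw [hexp, neg_pow (((u / 2 : ℝ) : ℂ) ^ 2)]
  ring

lemma continuousOn_half_cpow (ν : ℂ) :
    ContinuousOn (fun u : ℝ ↦ ((u / 2 : ℝ) : ℂ) ^ ν) (Set.Ioi 0) := by
  intro u hu
  have hcpow := Complex.continuousAt_ofReal_cpow_const (u / 2) ν (.inr (half_pos hu).ne')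
  exact (hcpow.comp (f := fun v : ℝ ↦ v / 2) (by fun_prop)).continuousWithinAt

lemma continuousOn_besselJ (hν : -1 < ν.re) : ContinuousOn (besselJ ν) (Set.Ioi 0) := by
  refine ContinuousOn.congr ((continuousOn_half_cpow ν).mul ?_)
    fun u hu ↦ besselJ_eq_cpow_mul_besselClifford ν hu
  exact ((continuous_besselClifford hν).comp (by fun_prop)).continuousOn

/-- The `j = 0` term `(u / 2) ^ ν / Γ(ν + 1)` of the series of `J_ν(u)`, which governs the behavior
of `J_ν` near `0`. -/
noncomputable def besselJLeading (ν : ℂ) (u : ℝ) : ℂ :=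
  ((u / 2 : ℝ) : ℂ) ^ ν / Complex.Gamma (ν + 1)

lemma continuousOn_besselJLeading (ν : ℂ) : ContinuousOn (besselJLeading ν) (Set.Ioi 0) :=
  (continuousOn_half_cpow ν).div_const _

lemma norm_besselJLeading (ν : ℂ) {u : ℝ} (hu : 0 < u) :
    ‖besselJLeading ν u‖ = (u / 2) ^ ν.re / ‖Complex.Gamma (ν + 1)‖ := by
  rw [besselJLeading, norm_div, Complex.norm_cpow_eq_rpow_re_of_pos (half_pos hu)]

lemma norm_besselJ_sub_besselJLeading_le (hν : -1 < ν.re) {u : ℝ} (hu : 0 < u) (hu₂ : u ≤ 2) :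
    ‖besselJ ν u - besselJLeading ν u‖ ≤ u / ‖Complex.Gamma (ν + 2)‖ := by
  have hw : 0 < u / 2 := half_pos hu
  have hnorm : ‖-((u / 2 : ℝ) : ℂ) ^ 2‖ = (u / 2) ^ 2 := by
    rw [norm_neg, norm_pow, Complex.norm_of_nonneg hw.le]
  have hexp : Real.exp ((u / 2) ^ 2) - 1 ≤ 2 * (u / 2) ^ 2 := by
    have hsq : |(u / 2) ^ 2| = (u / 2) ^ 2 := abs_of_nonneg (by positivity)
    have h := Real.abs_exp_sub_one_le (x := (u / 2) ^ 2) (by rw [hsq]; nlinarith)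
    rw [hsq] at h
    exact (le_abs_self _).trans h
  have hpow : (u / 2) ^ ν.re * (u / 2) ^ 2 ≤ u / 2 := by
    rw [← Real.rpow_natCast, ← Real.rpow_add hw]
    conv_rhs => rw [← Real.rpow_one (u / 2)]
    exact Real.rpow_le_rpow_of_exponent_ge hw (by linarith) (by push_cast; linarith)
  rw [besselJ_eq_cpow_mul_besselClifford ν hu, besselJLeading, div_eq_mul_inv _ (Complex.Gamma _),
    ← mul_sub, norm_mul, Complex.norm_cpow_eq_rpow_re_of_pos hw]
  calc (u / 2) ^ ν.re * ‖besselClifford ν (-((u / 2 : ℝ) : ℂ) ^ 2) - (Complex.Gamma (ν + 1))⁻¹‖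
      ≤ (u / 2) ^ ν.re * (2 * (u / 2) ^ 2 * ‖Complex.Gamma (ν + 2)‖⁻¹) := by
        gcongr
        refine (norm_besselClifford_sub_inv_Gamma_le hν _).trans ?_
        rw [hnorm]
        gcongr
    _ = 2 * ((u / 2) ^ ν.re * (u / 2) ^ 2) * ‖Complex.Gamma (ν + 2)‖⁻¹ := by ring
    _ ≤ 2 * (u / 2) * ‖Complex.Gamma (ν + 2)‖⁻¹ := by gcongr
    _ = u / ‖Complex.Gamma (ν + 2)‖ := by ring

end Bessel

section Cutoff

variable {φ : ℝ → ℝ} {A B C D : ℝ}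

lemma phiTilde_eq_intervalIntegral (hA : 0 ≤ A) (hAD : A ≤ D) (hleft : ∀ u ≤ A, φ u = 0)
    (hright : ∀ u, D ≤ u → φ u = 0) (β : ℂ) :
    phiTilde φ β = ∫ u in A..D, φ u • (besselJ (β - 1) u / u) := by
  have hsmul : ∀ u : ℝ, besselJ (β - 1) u * (φ u : ℂ) / u = φ u • (besselJ (β - 1) u / u) :=
    fun u ↦ by rw [Complex.real_smul]; ring
  have hsub : Set.Ioc A D ⊆ Set.Ioi 0 := fun u hu ↦ hA.trans_lt hu.1
  simp only [phiTilde, hsmul]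
  rw [intervalIntegral.integral_of_le hAD]
  refine setIntegral_eq_of_subset_of_forall_sdiff_eq_zero measurableSet_Ioi hsub fun u ⟨_, hu⟩ ↦ ?_
  have hφu : φ u = 0 := (le_or_gt u A).elim (hleft u) fun hAu ↦
    hright u (not_le.1 fun huD ↦ hu ⟨hAu, huD⟩).le
  rw [hφu, zero_smul]

variable {E : Type*} [NormedAddCommGroup E] [NormedSpace ℝ E] {g : ℝ → E}

lemma intervalIntegrable_smul_of_abs_le_one (hφ : Measurable φ) (hφ₁ : ∀ u, |φ u| ≤ 1)
    (hg : IntervalIntegrable g volume A B) :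
    IntervalIntegrable (fun u ↦ φ u • g u) volume A B :=
  ⟨hg.1.bdd_smul 1 hφ.aestronglyMeasurable (.of_forall hφ₁),
    hg.2.bdd_smul 1 hφ.aestronglyMeasurable (.of_forall hφ₁)⟩

lemma norm_intervalIntegral_smul_le {M : ℝ} (hAB : A ≤ B) (hφ₁ : ∀ u, |φ u| ≤ 1)
    (hM : ∀ u ∈ Set.Ioc A B, ‖g u‖ ≤ M) : ‖∫ u in A..B, φ u • g u‖ ≤ M * (B - A) := by
  rw [← abs_of_nonneg (sub_nonneg.2 hAB)]
  refine intervalIntegral.norm_integral_le_of_norm_le_const fun u hu ↦ ?_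
  rw [Set.uIoc_of_le hAB] at hu
  rw [norm_smul]
  exact (mul_le_of_le_one_left (norm_nonneg _) (hφ₁ u)).trans (hM u hu)

lemma norm_intervalIntegral_smul_sub_le {M₁ M₂ : ℝ} (hAB : A ≤ B) (hBC : B ≤ C) (hCD : C ≤ D)
    (hφ : Measurable φ) (hφ₁ : ∀ u, |φ u| ≤ 1) (hone : ∀ u ∈ Set.Icc B C, φ u = 1)
    (hg : IntervalIntegrable g volume A D) (hM₁ : ∀ u ∈ Set.Ioc A B, ‖g u‖ ≤ M₁)
    (hM₂ : ∀ u ∈ Set.Ioc C D, ‖g u‖ ≤ M₂) :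
    ‖(∫ u in A..D, φ u • g u) - ∫ u in B..C, g u‖ ≤ M₁ * (B - A) + M₂ * (D - C) := by
  have hint : ∀ {p q : ℝ}, A ≤ p → p ≤ q → q ≤ D →
      IntervalIntegrable (fun u ↦ φ u • g u) volume p q := fun hp hpq hq ↦
    intervalIntegrable_smul_of_abs_le_one hφ hφ₁ (hg.mono_set (by
      rw [Set.uIcc_of_le hpq, Set.uIcc_of_le (hp.trans (hpq.trans hq))]
      exact Set.Icc_subset_Icc hp hq))
  have hmid : ∫ u in B..C, φ u • g u = ∫ u in B..C, g u :=
    intervalIntegral.integral_congr fun u hu ↦ by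
      rw [Set.uIcc_of_le hBC] at hu
      simp only [hone u hu, one_smul]
  rw [← intervalIntegral.integral_add_adjacent_intervals (hint le_rfl hAB (hBC.trans hCD))
      (hint hAB (hBC.trans hCD) le_rfl),
    ← intervalIntegral.integral_add_adjacent_intervals (hint hAB hBC hCD)
      (hint (hAB.trans hBC) hCD le_rfl), hmid, add_left_comm, add_sub_cancel_left]
  exact (norm_add_le _ _).trans (add_le_add (norm_intervalIntegral_smul_le hAB hφ₁ hM₁)
    (norm_intervalIntegral_smul_le hCD hφ₁ hM₂))

end Cutoff

lemma intervalIntegrable_div_ofReal {f : ℝ → ℂ} (hf : ContinuousOn f (Set.Ioi 0)) {A D : ℝ}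
    (hA : 0 < A) (hAD : A ≤ D) : IntervalIntegrable (fun u ↦ f u / (u : ℂ)) volume A D := by
  refine ((hf.div Complex.continuous_ofReal.continuousOn fun u hu ↦
    Complex.ofReal_ne_zero.2 (ne_of_gt hu)).mono ?_).intervalIntegrable
  rw [Set.uIcc_of_le hAD]
  exact fun u hu ↦ hA.trans_le hu.1

lemma norm_integral_smul_besselJ_sub_le {ν : ℂ} (hν : -1 < ν.re) {φ : ℝ → ℝ} (hφ : Measurable φ)
    (hφ₁ : ∀ u, |φ u| ≤ 1) {A D : ℝ} (hA : 0 < A) (hAD : A ≤ D) (hD : D ≤ 2) :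
    ‖(∫ u in A..D, φ u • (besselJ ν u / u)) - ∫ u in A..D, φ u • (besselJLeading ν u / u)‖ ≤
      ‖Complex.Gamma (ν + 2)‖⁻¹ * (D - A) := by
  have hJ := intervalIntegrable_div_ofReal (continuousOn_besselJ hν) hA hAD
  have hL := intervalIntegrable_div_ofReal (continuousOn_besselJLeading ν) hA hAD
  rw [← intervalIntegral.integral_sub (intervalIntegrable_smul_of_abs_le_one hφ hφ₁ hJ)
    (intervalIntegrable_smul_of_abs_le_one hφ hφ₁ hL)]
  simp only [← smul_sub, ← sub_div]
  refine norm_intervalIntegral_smul_le hAD hφ₁ fun u hu ↦ ?_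
  have hu₀ : 0 < u := hA.trans hu.1
  rw [norm_div, Complex.norm_of_nonneg hu₀.le, div_le_iff₀ hu₀, inv_mul_eq_div]
  exact norm_besselJ_sub_besselJLeading_le hν hu₀ (hu.2.trans hD)

lemma norm_besselJLeading_div_le {s : ℂ} (hs : 0 ≤ s.re) {A u : ℝ} (hA : 0 < A) (hAu : A ≤ u) :
    ‖besselJLeading (-s) u / u‖ ≤ (A / 2) ^ (-s.re) / A / ‖Complex.Gamma (1 - s)‖ := by
  have hu : 0 < u := hA.trans_le hAu
  rw [norm_div, norm_besselJLeading _ hu, Complex.norm_of_nonneg hu.le, Complex.neg_re,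
    neg_add_eq_sub, div_right_comm]
  gcongr ?_ / ?_ / _
  exact Real.rpow_le_rpow_of_nonpos (half_pos hA) (by linarith) (neg_nonpos.2 hs)

lemma integral_besselJLeading_div {s : ℂ} (hs : s ≠ 0) {B C : ℝ} (hB : 0 < B) (hBC : B ≤ C) :
    ∫ u in B..C, besselJLeading (-s) u / u =
      2 ^ s / (s * Complex.Gamma (1 - s)) * ((B : ℂ) ^ (-s) - (C : ℂ) ^ (-s)) := by
  have hcongr : Set.EqOn (fun u : ℝ ↦ besselJLeading (-s) u / u)
      (fun u ↦ 2 ^ s / Complex.Gamma (1 - s) * (u : ℂ) ^ (-s - 1)) (Set.uIcc B C) := by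
    intro u hu
    rw [Set.uIcc_of_le hBC] at hu
    have hu₀ : 0 < u := hB.trans_le hu.1
    have hhalf : ((u / 2 : ℝ) : ℂ) ^ (-s) = (u : ℂ) ^ (-s) * 2 ^ s := by
      rw [Complex.ofReal_div, div_eq_mul_inv, ← Complex.ofReal_inv,
        Complex.mul_cpow_ofReal_nonneg hu₀.le (by norm_num), Complex.ofReal_inv,
        Complex.ofReal_ofNat, Complex.inv_cpow _ _ (by simp [Real.pi_ne_zero.symm]),
        Complex.cpow_neg 2, inv_inv]
    simp only [besselJLeading]
    rw [hhalf, neg_add_eq_sub, Complex.cpow_sub _ _ (Complex.ofReal_ne_zero.2 hu₀.ne'),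
      Complex.cpow_one]
    ring
  have hzero : (0 : ℝ) ∉ Set.uIcc B C := by
    rw [Set.uIcc_of_le hBC]
    exact fun h ↦ hB.not_ge h.1
  have hexp : -s - 1 ≠ -1 := fun h ↦ hs (neg_eq_zero.1 (sub_eq_neg_self.1 h))
  rw [intervalIntegral.integral_congr hcongr, intervalIntegral.integral_const_mul,
    integral_cpow (.inr ⟨hexp, hzero⟩), sub_add_cancel, div_neg, ← neg_div, neg_sub,
    div_mul_div_comm, mul_comm (Complex.Gamma _), ← div_mul_eq_mul_div]

theorem norm_phiTilde_one_sub_sub_le {s : ℂ} (hs : s ≠ 0) (hs₀ : 0 ≤ s.re) (hs₁ : s.re < 1)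
    {φ : ℝ → ℝ} (hφ : Measurable φ) (hφ₁ : ∀ u, |φ u| ≤ 1) {A B C D : ℝ} (hA : 0 < A)
    (hAB : A ≤ B) (hBC : B ≤ C) (hCD : C ≤ D) (hD : D ≤ 2)
    (hone : ∀ u ∈ Set.Icc B C, φ u = 1) (hleft : ∀ u ≤ A, φ u = 0)
    (hright : ∀ u, D ≤ u → φ u = 0) :
    ‖phiTilde φ (1 - s) -
        2 ^ s / (s * Complex.Gamma (1 - s)) * ((B : ℂ) ^ (-s) - (C : ℂ) ^ (-s))‖ ≤
      2 / ‖Complex.Gamma (2 - s)‖ +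
        ((A / 2) ^ (-s.re) * ((B - A) / A) + (C / 2) ^ (-s.re) * ((D - C) / C)) /
          ‖Complex.Gamma (1 - s)‖ := by
  have hAD : A ≤ D := hAB.trans (hBC.trans hCD)
  have hC : 0 < C := hA.trans_le (hAB.trans hBC)
  have hJ := norm_integral_smul_besselJ_sub_le (ν := -s) (by rw [Complex.neg_re]; linarith)
    hφ hφ₁ hA hAD hD
  have hcut := norm_intervalIntegral_smul_sub_le hAB hBC hCD hφ hφ₁ hone
    (intervalIntegrable_div_ofReal (continuousOn_besselJLeading (-s)) hA hAD)
    (fun u hu ↦ norm_besselJLeading_div_le hs₀ hA hu.1.le)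
    (fun u hu ↦ norm_besselJLeading_div_le hs₀ hC hu.1.le)
  rw [neg_add_eq_sub] at hJ
  rw [phiTilde_eq_intervalIntegral hA.le hAD hleft hright, sub_sub_cancel_left,
    ← integral_besselJLeading_div hs (hA.trans_le hAB) hBC]
  refine (norm_sub_le_norm_sub_add_norm_sub _ _ _).trans
    (add_le_add (hJ.trans ?_) (hcut.trans_eq (by ring)))
  rw [inv_mul_eq_div]
  gcongr
  linarith

lemma cpow_neg_ofReal_div {a y : ℝ} (ha : 0 < a) (hy : 0 < y) (s : ℂ) :
    ((a / y : ℝ) : ℂ) ^ (-s) = ((y / a : ℝ) : ℂ) ^ s := by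
  have harg : ((y / a : ℝ) : ℂ).arg ≠ π := by
    rw [Complex.arg_ofReal_of_nonneg (div_pos hy ha).le]
    exact Real.pi_ne_zero.symm
  rw [← inv_div y a, Complex.ofReal_inv, Complex.inv_cpow _ _ harg, Complex.cpow_neg, inv_inv]

lemma cpow_ofReal_two_mul_div {x a : ℝ} (hx : 0 ≤ x) (ha : 0 ≤ a) (s : ℂ) :
    ((2 * x / a : ℝ) : ℂ) ^ s = 2 ^ s * ((x / a : ℝ) : ℂ) ^ s := by
  rw [mul_div_assoc, Complex.ofReal_mul,
    Complex.mul_cpow_ofReal_nonneg two_pos.le (div_nonneg hx ha), Complex.ofReal_ofNat]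

lemma rpow_neg_div_le_mul_rpow_div {a x y k σ : ℝ} (ha : 0 < a) (hx : 0 ≤ x) (hy : 0 ≤ y)
    (hk : 1 ≤ k) (hyx : y ≤ k * x) (hσ₀ : 0 ≤ σ) (hσ₁ : σ ≤ 1) :
    (a / y) ^ (-σ) ≤ k * (x / a) ^ σ := by
  have hk₀ : 0 ≤ k := zero_le_one.trans hk
  calc (a / y) ^ (-σ) = (y / a) ^ σ := by rw [Real.rpow_neg_eq_inv_rpow, inv_div]
    _ ≤ (k * (x / a)) ^ σ := by
      rw [← mul_div_assoc]
      gcongr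
    _ = k ^ σ * (x / a) ^ σ := Real.mul_rpow hk₀ (div_nonneg hx ha.le)
    _ ≤ k * (x / a) ^ σ := by
      gcongr
      exact Real.rpow_le_self_of_one_le hk hσ₁

theorem norm_phiTilde_one_sub_sub_mul_cpow_le {s : ℂ} (hs : s ≠ 0) (hs₀ : 0 ≤ s.re)
    (hs₁ : s.re < 1) {φ : ℝ → ℝ} (hφ : Measurable φ) (hφ₁ : ∀ u, |φ u| ≤ 1) {x a T : ℝ}
    (hx : 0 < x) (ha : 0 < a) (hT₀ : 0 ≤ T) (hT : T ≤ x / 3) (hD : a / (x - T) ≤ 2)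
    (hone : ∀ u ∈ Set.Icc (a / (2 * x)) (a / x), φ u = 1)
    (hleft : ∀ u ≤ a / (2 * x + 2 * T), φ u = 0) (hright : ∀ u, a / (x - T) ≤ u → φ u = 0) :
    ‖phiTilde φ (1 - s) -
        2 ^ s * (2 ^ s - 1) / (s * Complex.Gamma (1 - s)) * ((x / a : ℝ) : ℂ) ^ s‖ ≤
      2 / ‖Complex.Gamma (2 - s)‖ +
        9 * ((x / a) ^ s.re * (T / x)) / ‖Complex.Gamma (1 - s)‖ := by
  have hxT : 0 < x - T := by linarith
  have hmain : (2 : ℂ) ^ s / (s * Complex.Gamma (1 - s)) *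
      (((a / (2 * x) : ℝ) : ℂ) ^ (-s) - ((a / x : ℝ) : ℂ) ^ (-s)) =
      2 ^ s * (2 ^ s - 1) / (s * Complex.Gamma (1 - s)) * ((x / a : ℝ) : ℂ) ^ s := by
    rw [cpow_neg_ofReal_div ha (by positivity), cpow_neg_ofReal_div ha hx,
      cpow_ofReal_two_mul_div hx.le ha.le]
    ring
  have hA : (a / (2 * x + 2 * T) / 2) ^ (-s.re) ≤ 6 * (x / a) ^ s.re := by
    rw [div_div]
    exact rpow_neg_div_le_mul_rpow_div ha hx.le (by positivity) (by norm_num) (by linarith) hs₀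
      hs₁.le
  have hC : (a / x / 2) ^ (-s.re) ≤ 2 * (x / a) ^ s.re := by
    rw [div_div]
    exact rpow_neg_div_le_mul_rpow_div ha hx.le (by positivity) (by norm_num) (by linarith) hs₀
      hs₁.le
  have hBA : (a / (2 * x) - a / (2 * x + 2 * T)) / (a / (2 * x + 2 * T)) = T / x := by
    field_simp
    ring
  have hDC : (a / (x - T) - a / x) / (a / x) = T / (x - T) := by
    field_simp
    ring
  have hratio : T / (x - T) ≤ 3 / 2 * (T / x) :=
    calc T / (x - T) ≤ T / (2 / 3 * x) := by gcongr; linarith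
      _ = 3 / 2 * (T / x) := by field_simp
  rw [← hmain]
  refine (norm_phiTilde_one_sub_sub_le hs hs₀ hs₁ hφ hφ₁ (by positivity) (by gcongr; linarith)
    (by gcongr; linarith) (by gcongr; linarith) hD hone hleft hright).trans ?_
  rw [hBA, hDC]
  gcongr
  calc (a / (2 * x + 2 * T) / 2) ^ (-s.re) * (T / x) +
        (a / x / 2) ^ (-s.re) * (T / (x - T))
      ≤ 6 * (x / a) ^ s.re * (T / x) + 2 * (x / a) ^ s.re * (3 / 2 * (T / x)) := by gcongr
    _ = 9 * ((x / a) ^ s.re * (T / x)) := by ring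

lemma ofReal_two_rpow_mul_div_mul_rpow {y : ℝ} (hy : 0 ≤ y) (σ : ℝ) :
    (((2 : ℝ) ^ σ * ((2 : ℝ) ^ σ - 1) / (σ * Real.Gamma (1 - σ)) * y ^ σ : ℝ) : ℂ) =
      2 ^ (σ : ℂ) * (2 ^ (σ : ℂ) - 1) / (σ * Complex.Gamma (1 - σ)) * (y : ℂ) ^ (σ : ℂ) := by
  have hG : Complex.Gamma (1 - σ) = (Real.Gamma (1 - σ) : ℂ) := by
    rw [← Complex.Gamma_ofReal, Complex.ofReal_sub, Complex.ofReal_one]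
  rw [hG]
  push_cast [Complex.ofReal_cpow hy, Complex.ofReal_cpow two_pos.le]
  rfl

lemma norm_Gamma_ofReal {r : ℝ} (hr : 0 < r) : ‖Complex.Gamma r‖ = Real.Gamma r := by
  rw [Complex.Gamma_ofReal, Complex.norm_of_nonneg (Real.Gamma_pos_of_pos hr).le]

theorem norm_phiTilde_one_sub_ofReal_sub_le {σ : ℝ} (hσ₀ : 0 < σ) (hσ₁ : σ < 1) {φ : ℝ → ℝ}
    (hφ : Measurable φ) (hφ₁ : ∀ u, |φ u| ≤ 1) {x a T : ℝ} (hx : 0 < x) (ha : 0 < a)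
    (hT₀ : 0 ≤ T) (hT : T ≤ x / 3) (hD : a / (x - T) ≤ 2)
    (hone : ∀ u ∈ Set.Icc (a / (2 * x)) (a / x), φ u = 1)
    (hleft : ∀ u ≤ a / (2 * x + 2 * T), φ u = 0) (hright : ∀ u, a / (x - T) ≤ u → φ u = 0) :
    ‖phiTilde φ (1 - σ) -
        ((2 ^ σ * (2 ^ σ - 1) / (σ * Real.Gamma (1 - σ)) * (x / a) ^ σ : ℝ) : ℂ)‖ ≤
      9 * ((x / a) ^ σ * (T / x) + 1) := by
  have hG₁ : 1 ≤ ‖Complex.Gamma (1 - σ)‖ := by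
    rw [← Complex.ofReal_one, ← Complex.ofReal_sub, norm_Gamma_ofReal (by linarith)]
    exact one_le_Gamma_of_le_one (by linarith) (by linarith)
  have hG₂ : 4 / 5 ≤ ‖Complex.Gamma (2 - σ)‖ := by
    rw [← Complex.ofReal_ofNat, ← Complex.ofReal_sub, norm_Gamma_ofReal (by linarith)]
    exact four_fifths_le_Gamma (by linarith) (by linarith)
  rw [ofReal_two_rpow_mul_div_mul_rpow (div_pos hx ha).le]
  calc _ ≤ 2 / ‖Complex.Gamma (2 - σ)‖ +
        9 * ((x / a) ^ σ * (T / x)) / ‖Complex.Gamma (1 - σ)‖ :=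
      norm_phiTilde_one_sub_sub_mul_cpow_le (Complex.ofReal_ne_zero.2 hσ₀.ne') hσ₀.le hσ₁
        hφ hφ₁ hx ha hT₀ hT hD hone hleft hright
    _ ≤ 2 / (4 / 5) + 9 * ((x / a) ^ σ * (T / x)) / 1 := by gcongr
    _ ≤ 9 * ((x / a) ^ σ * (T / x) + 1) := by linarith

lemma rpow_one_sub_le_div {c δ x : ℝ} (hc : 0 < c) (hδ : 0 < δ) (hx : c ^ (1 / δ) ≤ x) :
    x ^ (1 - δ) ≤ x / c := by
  have hx₀ : 0 < x := (Real.rpow_pos_of_pos hc _).trans_le hx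
  rw [Real.rpow_sub hx₀, Real.rpow_one]
  gcongr
  rwa [← Real.rpow_inv_le_iff_of_pos hc.le hx₀.le hδ, ← one_div]

lemma div_rpow_mul_rpow_one_sub_div {x a : ℝ} (hx : 0 < x) (ha : 0 < a) (δ σ : ℝ) :
    (x / a) ^ σ * (x ^ (1 - δ) / x) = a ^ (-σ) * x ^ (σ - δ) := by
  rw [Real.div_rpow hx.le ha.le, Real.rpow_neg ha.le, Real.rpow_sub hx, Real.rpow_sub hx,
    Real.rpow_one]
  field_simp

theorem stmt6_general {δ x a T t : ℝ} {φ : ℝ → ℝ} (hδ : 0 < δ) (hx : (3 : ℝ) ^ (1 / δ) ≤ x)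
    (hT : T = x ^ (1 - δ)) (ha : 0 < a) (hD : a / (x - T) ≤ 2) (hφ : Measurable φ)
    (hφ₁ : ∀ u, |φ u| ≤ 1) (hone : ∀ u ∈ Set.Icc (a / (2 * x)) (a / x), φ u = 1)
    (hleft : ∀ u ≤ a / (2 * x + 2 * T), φ u = 0) (hright : ∀ u, a / (x - T) ≤ u → φ u = 0)
    (ht₀ : 0 < t) (ht₁ : t < 1 / 2) :
    ‖phiTilde φ (1 - 2 * (t : ℂ)) -
        Complex.ofReal ((2 : ℝ) ^ (2 * t) * ((2 : ℝ) ^ (2 * t) - 1) /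
          (2 * t * Real.Gamma (1 - 2 * t)) * (x / a) ^ (2 * t))‖ ≤
      9 * (a ^ (-(2 * t)) * x ^ (2 * t - δ) + 1) := by
  have hx₀ : 0 < x := (by positivity : (0 : ℝ) < 3 ^ (1 / δ)).trans_le hx
  have hT₀ : 0 ≤ T := hT ▸ Real.rpow_nonneg hx₀.le _
  have hT₃ : T ≤ x / 3 := hT ▸ rpow_one_sub_le_div three_pos hδ hx
  have hbound := norm_phiTilde_one_sub_ofReal_sub_le (mul_pos two_pos ht₀) (by linarith) hφ hφ₁
    hx₀ ha hT₀ hT₃ hD hone hleft hright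
  rwa [Complex.ofReal_mul, Complex.ofReal_ofNat, hT, div_rpow_mul_rpow_one_sub_div hx₀ ha] at hbound

theorem stmt6 :
    ∀ δ t₀ : ℝ, 0 < δ → δ < 1 / 2 → 0 < t₀ → t₀ ≤ 1 / 4 →
      ∃ C : ℝ, ∀ (x a T T' : ℝ) (φ : ℝ → ℝ) (t : ℝ),
        (3 : ℝ) ^ (1 / δ) ≤ x → T = x ^ (1 - δ) → T' = x ^ (1 - 2 * δ) →
        0 < a → a / (x - T) ≤ 1.999 →
        ContDiff ℝ 1 φ → (∀ u, 0 ≤ φ u ∧ φ u ≤ 1) →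
        (∀ u, a / (2 * x) ≤ u → u ≤ a / x → φ u = 1) →
        (∀ u, u ≤ a / (2 * x + 2 * T) → φ u = 0) →
        (∀ u, a / (x - T) ≤ u → φ u = 0) →
        (∀ u ∈ Set.Ioo (a / (2 * x + 2 * T - 2 * T')) (a / (2 * x + 2 * T')),
          deriv φ u = 2 * x * (x + T) / (a * T)) →
        (∀ u ∈ Set.Ioo (a / (x - T')) (a / (x - T + T')),
          deriv φ u = -(x * (x - T)) / (a * T)) →
        (∀ u ∈ Set.Ioo (a / (2 * x + 2 * T)) (a / (2 * x + 2 * T - 2 * T')) ∪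
            Set.Ioo (a / (2 * x + 2 * T')) (a / (2 * x)),
          0 ≤ deriv φ u ∧ deriv φ u ≤ 4 * x * (x + T) / (a * T)) →
        (∀ u ∈ Set.Ioo (a / x) (a / (x - T')) ∪ Set.Ioo (a / (x - T + T')) (a / (x - T)),
          -(2 * x * (x - T)) / (a * T) ≤ deriv φ u ∧ deriv φ u ≤ 0) →
        (∀ u, u ∉ Set.Icc (a / (2 * x + 2 * T)) (a / (2 * x)) ∪
            Set.Icc (a / x) (a / (x - T)) → deriv φ u = 0) →
        t₀ ≤ t → t ≤ 1 / 4 →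
        ‖phiTilde φ (1 - 2 * (t : ℂ)) -
            Complex.ofReal ((2 : ℝ) ^ (2 * t) * ((2 : ℝ) ^ (2 * t) - 1) /
              (2 * t * Real.Gamma (1 - 2 * t)) * (x / a) ^ (2 * t))‖ ≤
          C * (a ^ (-(2 * t)) * x ^ (2 * t - δ) + 1) := by
  intro δ t₀ hδ _ ht₀ _
  exact ⟨9, fun x a T T' φ t hx hT _ ha hD hφ hφ₁ hone hleft hright _ _ _ _ _ ht ht₁ ↦
    stmt6_general hδ hx hT ha (hD.trans (by norm_num)) hφ.continuous.measurable
      (fun u ↦ (abs_of_nonneg (hφ₁ u).1).trans_le (hφ₁ u).2) (fun u hu ↦ hone u hu.1 hu.2)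
      hleft hright (ht₀.trans_le ht) (ht₁.trans_lt (by norm_num))⟩
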